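/- arXiv:1204.3778 — 3 statements merged into one kernel-verified Lean document; each statement's English description precedes it below -/
import Mathlib

section
/- Let (s,x̄) ∈ I × U with x̄ = x(s,t(s,x̄)), δ(s,t(s,x̄)) = 0, and [x_t(s,t(s,x̄)), c(s,t(s,x̄))] ≠ 0. Then ∂/∂s(c(s,t(s,x̄))) = −(1 + t_s(s,x̄)²)·x_t(s,t(s,x̄)), and in particular ∂/∂s(c(s,t(s,x̄))) ≠ 0. (This is the computation proving that the generating family G is a versal unfolding at an A₂ point.) -/
noncomputable section

/-- `det2 u v` is the determinant of the 2×2 matrix with columns `u` and `v`. -/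
def det2 (u v : ℝ × ℝ) : ℝ := u.1 * v.2 - u.2 * v.1

/-- Partial derivative with respect to the first coordinate `s`. -/
def pds (f : ℝ × ℝ → ℝ) (p : ℝ × ℝ) : ℝ := fderiv ℝ f p (1, 0)

/-- Partial derivative with respect to the second coordinate `t`. -/
def pdt (f : ℝ × ℝ → ℝ) (p : ℝ × ℝ) : ℝ := fderiv ℝ f p (0, 1)

/-- The planar map `x = (A, B)`. -/
def xmap (A B : ℝ × ℝ → ℝ) (p : ℝ × ℝ) : ℝ × ℝ := (A p, B p)

/-- The conjugate map `c = (-D, C)`. -/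
def cmap (C D : ℝ × ℝ → ℝ) (p : ℝ × ℝ) : ℝ × ℝ := (-D p, C p)

/-- `x_s = (A_s, B_s)`. -/
def xs (A B : ℝ × ℝ → ℝ) (p : ℝ × ℝ) : ℝ × ℝ := (pds A p, pds B p)

/-- `x_t = (A_t, B_t)`. -/
def xt (A B : ℝ × ℝ → ℝ) (p : ℝ × ℝ) : ℝ × ℝ := (pdt A p, pdt B p)

/-- `δ = A_s B_t - A_t B_s = [x_s, x_t]`. -/
def deltaMap (A B : ℝ × ℝ → ℝ) (p : ℝ × ℝ) : ℝ :=
  pds A p * pdt B p - pdt A p * pds B p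

/-!
Differentiate the incidence relation `[x̄ - x(s, t(s, x̄)), c(s, t(s, x̄))] = 0` in `s`. Where
`x̄ = x`, only `[∂ₛ x, c] = 0` survives, with `∂ₛ x = x_s + t_s x_t`. Since `δ = [x_s, x_t] = 0`,
also `[x_t, ∂ₛ x] = 0`; as `x_t` and `c` form a basis, `∂ₛ x = 0`, that is, `x_s = -t_s x_t`. The
Cauchy–Riemann equations give `∂ₛ c = c_s + t_s c_t = -x_t + t_s x_s = -(1 + t_s²) x_t`.
-/

open Filter Topology

section Determinant

lemma det2_zero_left (v : ℝ × ℝ) : det2 0 v = 0 := by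
  simp [det2]

lemma det2_neg_left (u v : ℝ × ℝ) : det2 (-u) v = -det2 u v := by
  simp only [det2, Prod.fst_neg, Prod.snd_neg]
  ring

lemma det2_smul_eq_add (u v w : ℝ × ℝ) :
    det2 v w • u = det2 u w • v + det2 v u • w := by
  ext <;> simp only [det2, Prod.smul_fst, Prod.smul_snd, Prod.fst_add, Prod.snd_add,
    smul_eq_mul] <;> ring

lemma eq_zero_of_det2_eq_zero {u v w : ℝ × ℝ} (hvw : det2 v w ≠ 0)
    (huw : det2 u w = 0) (hvu : det2 v u = 0) : u = 0 := by
  have h := det2_smul_eq_add u v w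
  rw [huw, hvu, zero_smul, zero_smul, add_zero] at h
  exact (smul_eq_zero.mp h).resolve_left hvw

lemma hasDerivAt_det2 {u v : ℝ → ℝ × ℝ} {u' v' : ℝ × ℝ} {s : ℝ}
    (hu : HasDerivAt u u' s) (hv : HasDerivAt v v' s) :
    HasDerivAt (fun r => det2 (u r) (v r)) (det2 u' (v s) + det2 (u s) v') s := by
  have fst_deriv {w : ℝ → ℝ × ℝ} {w' : ℝ × ℝ} (hw : HasDerivAt w w' s) :
      HasDerivAt (fun r => (w r).1) w'.1 s :=
    (hasFDerivAt_fst (p := w s)).comp_hasDerivAt s hw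
  have snd_deriv {w : ℝ → ℝ × ℝ} {w' : ℝ × ℝ} (hw : HasDerivAt w w' s) :
      HasDerivAt (fun r => (w r).2) w'.2 s :=
    (hasFDerivAt_snd (p := w s)).comp_hasDerivAt s hw
  refine (((fst_deriv hu).mul (snd_deriv hv)).sub
    ((snd_deriv hu).mul (fst_deriv hv))).congr_deriv ?_
  simp only [det2]
  ring

lemma det2_deriv_eq_zero_of_incidence {x c : ℝ → ℝ × ℝ} {x' xb : ℝ × ℝ} {s : ℝ}
    (hx : HasDerivAt x x' s) (hc : DifferentiableAt ℝ c s)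
    (hincidence : ∀ᶠ r in 𝓝 s, det2 (xb - x r) (c r) = 0) (hxb : xb = x s) :
    det2 x' (c s) = 0 := by
  have product_rule := hasDerivAt_det2 (hx.const_sub xb) hc.hasDerivAt
  have constant : HasDerivAt (fun r => det2 (xb - x r) (c r)) 0 s :=
    (hasDerivAt_const s 0).congr_of_eventuallyEq hincidence
  have h := product_rule.unique constant
  rwa [hxb, sub_self, det2_zero_left, add_zero, det2_neg_left, neg_eq_zero] at h

lemma det2_xt_xs_add_smul_xt (A B : ℝ × ℝ → ℝ) (p : ℝ × ℝ) (τ : ℝ) :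
    det2 (xt A B p) (xs A B p + τ • xt A B p) = -deltaMap A B p := by
  simp only [det2, xs, xt, deltaMap, Prod.smul_mk, Prod.mk_add_mk, smul_eq_mul]
  ring

end Determinant

lemma hasDerivAt_comp_graph {𝕜 E : Type*} [NontriviallyNormedField 𝕜] [NormedAddCommGroup E]
    [NormedSpace 𝕜 E] {f : 𝕜 × 𝕜 → E} {t : 𝕜 → 𝕜} {τ s : 𝕜}
    (hf : DifferentiableAt 𝕜 f (s, t s)) (ht : HasDerivAt t τ s) :
    HasDerivAt (fun r => f (r, t r))
      (fderiv 𝕜 f (s, t s) (1, 0) + τ • fderiv 𝕜 f (s, t s) (0, 1)) s := by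
  have graph_deriv : HasDerivAt (fun r => (r, t r)) ((1 : 𝕜), τ) s := (hasDerivAt_id s).prodMk ht
  have tangent_eq : ((1 : 𝕜), τ) = (1, 0) + τ • (0, 1) := by simp
  rw [← map_smul, ← map_add, ← tangent_eq]
  exact hf.hasFDerivAt.comp_hasDerivAt s graph_deriv

section Graph

variable {A B C D : ℝ × ℝ → ℝ} {t : ℝ → ℝ} {τ s : ℝ}

lemma hasDerivAt_xmap_graph (hA : DifferentiableAt ℝ A (s, t s))
    (hB : DifferentiableAt ℝ B (s, t s)) (ht : HasDerivAt t τ s) :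
    HasDerivAt (fun r => xmap A B (r, t r)) (xs A B (s, t s) + τ • xt A B (s, t s)) s :=
  (hasDerivAt_comp_graph hA ht).prodMk (hasDerivAt_comp_graph hB ht)

lemma hasDerivAt_cmap_graph (hC : DifferentiableAt ℝ C (s, t s))
    (hD : DifferentiableAt ℝ D (s, t s))
    (hCR1 : pds A (s, t s) = -pdt D (s, t s)) (hCR2 : pdt A (s, t s) = pds D (s, t s))
    (hCR3 : pds B (s, t s) = pdt C (s, t s)) (hCR4 : pdt B (s, t s) = -pds C (s, t s))
    (ht : HasDerivAt t τ s) :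
    HasDerivAt (fun r => cmap C D (r, t r)) (-xt A B (s, t s) + τ • xs A B (s, t s)) s := by
  refine ((hasDerivAt_comp_graph hD ht).neg.prodMk
    (hasDerivAt_comp_graph hC ht)).congr_deriv ?_
  ext
  · change -(pds D (s, t s) + τ * pdt D (s, t s)) = -pdt A (s, t s) + τ * pds A (s, t s)
    rw [hCR1, hCR2]
    ring
  · change pds C (s, t s) + τ * pdt C (s, t s) = -pdt B (s, t s) + τ * pds B (s, t s)
    rw [hCR3, hCR4, neg_neg]

theorem dsc_at_A2_point_general {xb : ℝ × ℝ}
    (hA : DifferentiableAt ℝ A (s, t s)) (hB : DifferentiableAt ℝ B (s, t s))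
    (hC : DifferentiableAt ℝ C (s, t s)) (hD : DifferentiableAt ℝ D (s, t s))
    (hCR1 : pds A (s, t s) = -pdt D (s, t s)) (hCR2 : pdt A (s, t s) = pds D (s, t s))
    (hCR3 : pds B (s, t s) = pdt C (s, t s)) (hCR4 : pdt B (s, t s) = -pds C (s, t s))
    (ht : HasDerivAt t τ s)
    (hincidence : ∀ᶠ r in 𝓝 s, det2 (xb - xmap A B (r, t r)) (cmap C D (r, t r)) = 0)
    (hxb : xb = xmap A B (s, t s)) (hδ : deltaMap A B (s, t s) = 0)
    (hne : det2 (xt A B (s, t s)) (cmap C D (s, t s)) ≠ 0) :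
    HasDerivAt (fun r => cmap C D (r, t r)) (-(1 + τ ^ 2) • xt A B (s, t s)) s ∧
      deriv (fun r => cmap C D (r, t r)) s ≠ 0 := by
  have hx := hasDerivAt_xmap_graph hA hB ht
  have hc := hasDerivAt_cmap_graph hC hD hCR1 hCR2 hCR3 hCR4 ht
  have x_deriv_eq_zero : xs A B (s, t s) + τ • xt A B (s, t s) = 0 :=
    eq_zero_of_det2_eq_zero hne
      (det2_deriv_eq_zero_of_incidence (c := fun r => cmap C D (r, t r)) hx
        hc.differentiableAt hincidence hxb)
      (by rw [det2_xt_xs_add_smul_xt, hδ, neg_zero])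
  have c_deriv : HasDerivAt (fun r => cmap C D (r, t r)) (-(1 + τ ^ 2) • xt A B (s, t s)) s := by
    refine hc.congr_deriv ?_
    rw [eq_neg_of_add_eq_zero_left x_deriv_eq_zero]
    module
  have xt_ne_zero : xt A B (s, t s) ≠ 0 := fun h => hne (by rw [h, det2_zero_left])
  refine ⟨c_deriv, ?_⟩
  rw [c_deriv.deriv]
  exact smul_ne_zero (neg_ne_zero.mpr (by positivity)) xt_ne_zero

end Graph

theorem dsc_at_A2_point
    (Ω : Set (ℝ × ℝ)) (hΩ : IsOpen Ω)
    (A B C D : ℝ × ℝ → ℝ)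
    (hA : ContDiffOn ℝ (⊤ : ℕ∞) A Ω) (hB : ContDiffOn ℝ (⊤ : ℕ∞) B Ω)
    (hC : ContDiffOn ℝ (⊤ : ℕ∞) C Ω) (hD : ContDiffOn ℝ (⊤ : ℕ∞) D Ω)
    (hCR1 : ∀ p ∈ Ω, pds A p = - pdt D p)
    (hCR2 : ∀ p ∈ Ω, pdt A p = pds D p)
    (hCR3 : ∀ p ∈ Ω, pds B p = pdt C p)
    (hCR4 : ∀ p ∈ Ω, pdt B p = - pds C p)
    (s₀ t₀ : ℝ) (hst₀ : (s₀, t₀) ∈ Ω)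
    (hne₀ : det2 (xt A B (s₀, t₀)) (cmap C D (s₀, t₀)) ≠ 0)
    (I : Set ℝ) (U : Set (ℝ × ℝ)) (hI : IsOpen I) (hU : IsOpen U)
    (hs₀ : s₀ ∈ I) (hx₀ : xmap A B (s₀, t₀) ∈ U)
    (T : ℝ → ℝ × ℝ → ℝ)
    (hT : ContDiffOn ℝ (⊤ : ℕ∞) (fun q : ℝ × (ℝ × ℝ) => T q.1 q.2) (I ×ˢ U))
    (hT₀ : T s₀ (xmap A B (s₀, t₀)) = t₀)
    (hTmem : ∀ s ∈ I, ∀ xb ∈ U, (s, T s xb) ∈ Ω)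
    (hTeq : ∀ s ∈ I, ∀ xb ∈ U,
      det2 (xb - xmap A B (s, T s xb)) (cmap C D (s, T s xb)) = 0)
    (s : ℝ) (xb : ℝ × ℝ) (hs : s ∈ I) (hxb : xb ∈ U)
    (hx : xb = xmap A B (s, T s xb))
    (hδ : deltaMap A B (s, T s xb) = 0)
    (hne : det2 (xt A B (s, T s xb)) (cmap C D (s, T s xb)) ≠ 0)
    :
    deriv (fun s' => cmap C D (s', T s' xb)) s
        = (-(1 + (deriv (fun s' => T s' xb) s) ^ 2)) • xt A B (s, T s xb) ∧
    deriv (fun s' => cmap C D (s', T s' xb)) s ≠ 0 := by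
  have hp := hTmem s hs xb hxb
  have hq := (hI.prod hU).mem_nhds (Set.mk_mem_prod hs hxb)
  have hcurve : DifferentiableAt ℝ (fun r => T r xb) s :=
    ((hT.differentiableOn (by simp)).differentiableAt hq).comp (f := fun r => (r, xb)) s
      (by fun_prop)
  have hdiff {f : ℝ × ℝ → ℝ} (hf : ContDiffOn ℝ (⊤ : ℕ∞) f Ω) :
      DifferentiableAt ℝ f (s, T s xb) :=
    (hf.differentiableOn (by simp)).differentiableAt (hΩ.mem_nhds hp)
  exact (dsc_at_A2_point_general (hdiff hA) (hdiff hB) (hdiff hC) (hdiff hD)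
    (hCR1 _ hp) (hCR2 _ hp) (hCR3 _ hp) (hCR4 _ hp) hcurve.hasDerivAt
    ((hI.eventually_mem hs).mono fun r hr => hTeq r hr xb hxb) hx hδ hne).imp_left
    HasDerivAt.deriv
end
end

section
/- Let (s,x̄) ∈ I × U with x̄ = x(s,t(s,x̄)), δ(s,t(s,x̄)) = 0, ∂/∂s(δ(s,t(s,x̄))) = 0, and [x_t(s,t(s,x̄)), c(s,t(s,x̄))] ≠ 0. Then G_ssss(s,x̄) = (1 + t_s(s,x̄)²)·∂²/∂s²(δ(s,t(s,x̄))). In particular, at such a point G_ssss(s,x̄) ≠ 0 if and only if ∂²/∂s²(δ(s,t(s,x̄))) ≠ 0. -/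
noncomputable section

/-!
Fix `x̄` and put `y(s) = x̄ - x(s, t(s, x̄))`, `c(s) = c(s, t(s, x̄))`. The relation `[y, c] = 0`
turns `G' = -[y', c]` into `G' = [y, c']`, so `G'' = [y', c'] + [y, c'']`. The Cauchy–Riemann
equations give `[y', c'] = (1 + t_s²) δ`. At the point in question `c` and `c'` are independent, and
both pairings against them of first `y'` and then `y''` vanish, so `y`, `y'` and `y''` are all zero
there. Hence `[y, c'']` contributes nothing to `G''''`, and since `δ` and its first derivative are
zero, only `(1 + t_s²) δ''` survives.
-/

open Filter Topology

theorem eventually_differentiableAt_of_contDiffAt {𝕜 E F : Type*} [NontriviallyNormedField 𝕜]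
    [NormedAddCommGroup E] [NormedSpace 𝕜 E] [NormedAddCommGroup F] [NormedSpace 𝕜 F]
    {f : E → F} {x : E} {n : WithTop ℕ∞} (hf : ContDiffAt 𝕜 n f x) (hn : n ≠ 0) :
    ∀ᶠ z in 𝓝 x, DifferentiableAt 𝕜 f z :=
  ((hf.of_le (ENat.one_le_iff_ne_zero_withTop.mpr hn)).eventually (by simp)).mono
    fun _ hz ↦ hz.differentiableAt_one

section Bilinear

variable {𝕜 E F W : Type*} [NontriviallyNormedField 𝕜]
  [NormedAddCommGroup E] [NormedSpace 𝕜 E] [NormedAddCommGroup F] [NormedSpace 𝕜 F]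
  [NormedAddCommGroup W] [NormedSpace 𝕜 W]
  (β : E →L[𝕜] F →L[𝕜] W) {y : 𝕜 → E} {c : 𝕜 → F} {s : 𝕜}

theorem hasDerivAt_bilinear_of_eq_zero {y' : E} (hy : HasDerivAt y y' s)
    (hc : ContinuousAt c s) (hy0 : y s = 0) :
    HasDerivAt (fun r ↦ β (y r) (c r)) (β y' (c s)) s := by
  rw [hasDerivAt_iff_tendsto_slope] at hy ⊢
  have slope_eq : slope (fun r ↦ β (y r) (c r)) s = fun r ↦ β (slope y s r) (c r) := by
    ext r
    simp [slope_def_module, hy0]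
  rw [slope_eq]
  exact (β.continuous₂.tendsto (y', c s)).comp (hy.prodMk_nhds (hc.mono_left nhdsWithin_le_nhds))

theorem deriv_bilinear_eventuallyEq {m n : WithTop ℕ∞} (hy : ContDiffAt 𝕜 m y s)
    (hc : ContDiffAt 𝕜 n c s) (hm : m ≠ 0) (hn : n ≠ 0) :
    deriv (fun r ↦ β (y r) (c r)) =ᶠ[𝓝 s]
      fun r ↦ β (y r) (deriv c r) + β (deriv y r) (c r) := by
  filter_upwards [eventually_differentiableAt_of_contDiffAt hy hm,
    eventually_differentiableAt_of_contDiffAt hc hn] with r hyr hcr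
  exact β.deriv_of_bilinear (fun _ ↦ hyr) (fun _ ↦ hcr)

theorem hasDerivAt_deriv_bilinear_of_eq_zero (hy : ContDiffAt 𝕜 2 y s) (hc : ContDiffAt 𝕜 1 c s)
    (hy0 : y s = 0) (hy1 : deriv y s = 0) :
    HasDerivAt (deriv fun r ↦ β (y r) (c r)) (β (deriv (deriv y) s) (c s)) s := by
  have hy' : HasDerivAt y 0 s := hy1 ▸ (hy.differentiableAt (by simp)).hasDerivAt
  have hy'' : HasDerivAt (deriv y) (deriv (deriv y) s) s :=
    ((hy.derivWithin (m := 1) (by norm_num)).differentiableAt (by simp)).hasDerivAt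
  have hc' : ContinuousAt (deriv c) s := (hc.derivWithin (m := 0) (by simp)).continuousAt
  have hsum := (hasDerivAt_bilinear_of_eq_zero β hy' hc' hy0).add
    (hasDerivAt_bilinear_of_eq_zero β hy'' hc.continuousAt hy1)
  simpa using hsum.congr_of_eventuallyEq
    (deriv_bilinear_eventuallyEq β hy hc two_ne_zero one_ne_zero)

theorem deriv_mul_of_eq_zero {f φ : 𝕜 → 𝕜} (hf : DifferentiableAt 𝕜 f s)
    (hφ : ContinuousAt φ s) (hf0 : f s = 0) :
    deriv (fun r ↦ f r * φ r) s = deriv f s * φ s :=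
  (hasDerivAt_bilinear_of_eq_zero (ContinuousLinearMap.mul 𝕜 𝕜) hf.hasDerivAt hφ hf0).deriv

theorem deriv_deriv_mul_of_eq_zero {f φ : 𝕜 → 𝕜} (hf : ContDiffAt 𝕜 2 f s)
    (hφ : ContDiffAt 𝕜 1 φ s) (hf0 : f s = 0) (hf1 : deriv f s = 0) :
    deriv (deriv fun r ↦ f r * φ r) s = deriv (deriv f) s * φ s :=
  (hasDerivAt_deriv_bilinear_of_eq_zero (ContinuousLinearMap.mul 𝕜 𝕜) hf hφ hf0 hf1).deriv

theorem bilinear_deriv_eq_zero (hy : DifferentiableAt 𝕜 y s)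
    (hc : ContinuousAt c s) (hy0 : y s = 0) (hyc : (fun r ↦ β (y r) (c r)) =ᶠ[𝓝 s] 0) :
    β (deriv y s) (c s) = 0 := by
  rw [← (hasDerivAt_bilinear_of_eq_zero β hy.hasDerivAt hc hy0).deriv, hyc.deriv_eq]
  simp

theorem bilinear_deriv_deriv_eq_zero (hy : ContDiffAt 𝕜 2 y s)
    (hc : ContDiffAt 𝕜 1 c s) (hy0 : y s = 0) (hy1 : deriv y s = 0)
    (hyc : (fun r ↦ β (y r) (c r)) =ᶠ[𝓝 s] 0) :
    β (deriv (deriv y) s) (c s) = 0 := by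
  rw [← (hasDerivAt_deriv_bilinear_of_eq_zero β hy hc hy0 hy1).deriv, hyc.deriv.deriv_eq]
  simp

theorem deriv_deriv_eventuallyEq_of_bilinear_eventuallyEq_zero {G : 𝕜 → W}
    (hy : ContDiffAt 𝕜 1 y s) (hc : ContDiffAt 𝕜 2 c s)
    (hyc : (fun r ↦ β (y r) (c r)) =ᶠ[𝓝 s] 0)
    (hG : deriv G =ᶠ[𝓝 s] fun r ↦ -β (deriv y r) (c r)) :
    deriv (deriv G) =ᶠ[𝓝 s]
      fun r ↦ β (y r) (deriv (deriv c) r) + β (deriv y r) (deriv c r) := by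
  have hG' : deriv G =ᶠ[𝓝 s] fun r ↦ β (y r) (deriv c r) := by
    filter_upwards [hG, hyc.deriv,
      deriv_bilinear_eventuallyEq β hy hc one_ne_zero two_ne_zero] with r hGr hr0 hr
    rw [hGr, ← sub_eq_zero, ← neg_add', neg_eq_zero, add_comm, ← hr, hr0]
    simp
  exact hG'.deriv.trans
    (deriv_bilinear_eventuallyEq β hy (hc.derivWithin (m := 1) (by norm_num)) one_ne_zero
      one_ne_zero)

theorem deriv_eq_zero_and_deriv_deriv_eq_zero_of_bilinear (hy : ContDiffAt 𝕜 2 y s)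
    (hc : ContDiffAt 𝕜 1 c s) (hc' : ContinuousAt (deriv c) s) (hy0 : y s = 0)
    (hyc : (fun r ↦ β (y r) (c r)) =ᶠ[𝓝 s] 0)
    (hsep : ∀ w, β w (c s) = 0 → β w (deriv c s) = 0 → w = 0)
    (hpair0 : β (deriv y s) (deriv c s) = 0)
    (hpair1 : deriv (fun r ↦ β (deriv y r) (deriv c r)) s = 0) :
    deriv y s = 0 ∧ deriv (deriv y) s = 0 := by
  have hy' : HasDerivAt (deriv y) (deriv (deriv y) s) s :=
    ((hy.derivWithin (m := 1) (by norm_num)).differentiableAt (by simp)).hasDerivAt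
  have hy1 : deriv y s = 0 := hsep _
    (bilinear_deriv_eq_zero β (hy.differentiableAt two_ne_zero) hc.continuousAt hy0 hyc) hpair0
  have hpair2 : β (deriv (deriv y) s) (deriv c s) = 0 :=
    hpair1 ▸ (hasDerivAt_bilinear_of_eq_zero β hy' hc' hy1).deriv.symm
  exact ⟨hy1, hsep _ (bilinear_deriv_deriv_eq_zero β hy hc hy0 hy1 hyc) hpair2⟩

theorem deriv_deriv_deriv_deriv_eq_of_bilinear_eventuallyEq_zero {G : 𝕜 → W}
    (hy : ContDiffAt 𝕜 3 y s) (hc : ContDiffAt 𝕜 3 c s) (hy0 : y s = 0)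
    (hyc : (fun r ↦ β (y r) (c r)) =ᶠ[𝓝 s] 0)
    (hG : deriv G =ᶠ[𝓝 s] fun r ↦ -β (deriv y r) (c r))
    (hsep : ∀ w, β w (c s) = 0 → β w (deriv c s) = 0 → w = 0)
    (hpair0 : β (deriv y s) (deriv c s) = 0)
    (hpair1 : deriv (fun r ↦ β (deriv y r) (deriv c r)) s = 0) :
    deriv (deriv (deriv (deriv G))) s =
      deriv (deriv fun r ↦ β (deriv y r) (deriv c r)) s := by
  have hy2 : ContDiffAt 𝕜 2 y s := hy.of_le (by norm_num)
  have hy' : ContDiffAt 𝕜 2 (deriv y) s := hy.derivWithin (by norm_num)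
  have hc' : ContDiffAt 𝕜 2 (deriv c) s := hc.derivWithin (by norm_num)
  have hc'' : ContDiffAt 𝕜 1 (deriv (deriv c)) s := hc'.derivWithin (by norm_num)
  obtain ⟨hy'_zero, hy''_zero⟩ := deriv_eq_zero_and_deriv_deriv_eq_zero_of_bilinear β hy2
    (hc.of_le (by norm_num)) hc'.continuousAt hy0 hyc hsep hpair0 hpair1
  have hpair : ContDiffAt 𝕜 2 (fun r ↦ β (deriv y r) (deriv c r)) s :=
    (β.contDiff.contDiffAt.comp s hy').clm_apply hc'
  have hpair' : ContDiffAt 𝕜 1 (deriv fun r ↦ β (deriv y r) (deriv c r)) s :=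
    hpair.derivWithin (by norm_num)
  have hrem : ContDiffAt 𝕜 1 (fun r ↦ β (y r) (deriv (deriv c) r)) s :=
    (β.contDiff.contDiffAt.comp s (hy.of_le (by norm_num))).clm_apply hc''
  have hrem' : HasDerivAt (deriv fun r ↦ β (y r) (deriv (deriv c) r)) 0 s := by
    simpa [hy''_zero] using hasDerivAt_deriv_bilinear_of_eq_zero β hy2 hc'' hy0 hy'_zero
  have hG3 : deriv (deriv (deriv G)) =ᶠ[𝓝 s]
      deriv (fun r ↦ β (y r) (deriv (deriv c) r)) +
        deriv fun r ↦ β (deriv y r) (deriv c r) := by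
    filter_upwards [(deriv_deriv_eventuallyEq_of_bilinear_eventuallyEq_zero β
        (hy.of_le (by norm_num)) (hc.of_le (by norm_num)) hyc hG).deriv,
      eventually_differentiableAt_of_contDiffAt hrem one_ne_zero,
      eventually_differentiableAt_of_contDiffAt hpair two_ne_zero] with r hGr hr hr'
    rw [hGr]
    exact deriv_add hr hr'
  rw [hG3.deriv_eq, deriv_add hrem'.differentiableAt hpair'.differentiableAt_one, hrem'.deriv,
    zero_add]

end Bilinear

theorem isBilinearMap_det2 : IsBilinearMap ℝ det2 where
  add_left u v w := by simp only [det2, Prod.fst_add, Prod.snd_add]; ring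
  smul_left a u v := by simp only [det2, Prod.smul_fst, Prod.smul_snd, smul_eq_mul]; ring
  add_right u v w := by simp only [det2, Prod.fst_add, Prod.snd_add]; ring
  smul_right a u v := by simp only [det2, Prod.smul_fst, Prod.smul_snd, smul_eq_mul]; ring

/-- The pairing `det2` as a continuous bilinear map, so that the product rule for bilinear maps
applies to it. -/
def det2CLM : ℝ × ℝ →L[ℝ] ℝ × ℝ →L[ℝ] ℝ := isBilinearMap_det2.toContinuousBilinearMap

theorem eq_zero_of_det2_eq_zero_s15 {c d w : ℝ × ℝ} (hdc : det2 d c ≠ 0) (hwc : det2 w c = 0)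
    (hwd : det2 w d = 0) : w = 0 := by
  have cramer : det2 d c • w = det2 w c • d - det2 w d • c := by
    ext <;> simp only [det2, Prod.smul_fst, Prod.smul_snd, Prod.fst_sub, Prod.snd_sub,
      smul_eq_mul] <;> ring
  simpa [hwc, hwd, hdc] using cramer

theorem det2_neg_add_smul_smul_sub (u v : ℝ × ℝ) (a : ℝ) :
    det2 (-(u + a • v)) (a • u - v) = det2 u v * (1 + a ^ 2) := by
  simp only [det2, Prod.fst_neg, Prod.snd_neg, Prod.fst_add, Prod.snd_add, Prod.fst_sub,
    Prod.snd_sub, Prod.smul_fst, Prod.smul_snd, smul_eq_mul]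
  ring

theorem det2_smul_sub_ne_zero {u v c : ℝ × ℝ} {a : ℝ} (hvc : det2 v c ≠ 0)
    (huc : det2 (-(u + a • v)) c = 0) : det2 (a • u - v) c ≠ 0 := by
  have expand : det2 (a • u - v) c = -a * det2 (-(u + a • v)) c - (1 + a ^ 2) * det2 v c := by
    simp only [det2, Prod.fst_neg, Prod.snd_neg, Prod.fst_add, Prod.snd_add, Prod.fst_sub,
      Prod.snd_sub, Prod.smul_fst, Prod.smul_snd, smul_eq_mul]
    ring
  rw [expand, huc, mul_zero, zero_sub, neg_ne_zero]
  exact mul_ne_zero (by positivity) hvc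

theorem contDiffAt_deltaMap {A B : ℝ × ℝ → ℝ} {p : ℝ × ℝ} {m n : WithTop ℕ∞}
    (hA : ContDiffAt ℝ n A p) (hB : ContDiffAt ℝ n B p) (hmn : m + 1 ≤ n) :
    ContDiffAt ℝ m (deltaMap A B) p := by
  have partial_smooth {f : ℝ × ℝ → ℝ} (hf : ContDiffAt ℝ n f p) (v : ℝ × ℝ) :
      ContDiffAt ℝ m (fun q ↦ fderiv ℝ f q v) p :=
    (hf.fderiv_right hmn).clm_apply contDiffAt_const
  exact ((partial_smooth hA _).mul (partial_smooth hB _)).sub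
    ((partial_smooth hA _).mul (partial_smooth hB _))

/-- The Cauchy–Riemann equations at `p` for `A - iD` and `B + iC`, that is, `x_s = c_t` and
`x_t = -c_s`. -/
structure IsCauchyRiemannAt (A B C D : ℝ × ℝ → ℝ) (p : ℝ × ℝ) : Prop where
  pds_A : pds A p = -pdt D p
  pdt_A : pdt A p = pds D p
  pds_B : pds B p = pdt C p
  pdt_B : pdt B p = -pds C p

section Graph

variable {A B C D f g : ℝ × ℝ → ℝ} {τ : ℝ → ℝ} {τ' r : ℝ}

theorem hasDerivAt_comp_graph_s15 (hf : DifferentiableAt ℝ f (r, τ r)) (hτ : HasDerivAt τ τ' r) :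
    HasDerivAt (fun r ↦ f (r, τ r)) (pds f (r, τ r) + τ' * pdt f (r, τ r)) r := by
  have tangent : ((1 : ℝ), τ') = (1, 0) + τ' • (0, 1) := by simp
  have hcomp := hf.hasFDerivAt.comp_hasDerivAt r ((hasDerivAt_id r).prodMk hτ)
  rwa [tangent, map_add, map_smul] at hcomp

/-- The displacement `x̄ - x(r, τ r)` from the curve `r ↦ x(r, τ r)` to the fixed point `x̄ = xb`.
With `τ r = t(r, x̄)` it is the first entry of the bracket in the equation that defines `t`. -/
def displacement (A B : ℝ × ℝ → ℝ) (τ : ℝ → ℝ) (xb : ℝ × ℝ) (r : ℝ) : ℝ × ℝ :=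
  xb - xmap A B (r, τ r)

/-- The vector `c(r, τ r)`, as a curve in `r`. -/
def direction (C D : ℝ × ℝ → ℝ) (τ : ℝ → ℝ) (r : ℝ) : ℝ × ℝ := cmap C D (r, τ r)

theorem contDiffAt_displacement {n : WithTop ℕ∞} (hA : ContDiffAt ℝ n A (r, τ r))
    (hB : ContDiffAt ℝ n B (r, τ r)) (hτ : ContDiffAt ℝ n τ r) (xb : ℝ × ℝ) :
    ContDiffAt ℝ n (displacement A B τ xb) r :=
  have hgraph : ContDiffAt ℝ n (fun r ↦ (r, τ r)) r := contDiffAt_id.prodMk hτ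
  contDiffAt_const.sub ((hA.comp r hgraph).prodMk (hB.comp r hgraph))

theorem contDiffAt_direction {n : WithTop ℕ∞} (hC : ContDiffAt ℝ n C (r, τ r))
    (hD : ContDiffAt ℝ n D (r, τ r)) (hτ : ContDiffAt ℝ n τ r) :
    ContDiffAt ℝ n (direction C D τ) r :=
  have hgraph : ContDiffAt ℝ n (fun r ↦ (r, τ r)) r := contDiffAt_id.prodMk hτ
  (hD.comp r hgraph).neg.prodMk (hC.comp r hgraph)

theorem hasDerivAt_displacement (hA : DifferentiableAt ℝ A (r, τ r))
    (hB : DifferentiableAt ℝ B (r, τ r)) (hτ : HasDerivAt τ τ' r) (xb : ℝ × ℝ) :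
    HasDerivAt (displacement A B τ xb) (-(xs A B (r, τ r) + τ' • xt A B (r, τ r))) r :=
  ((hasDerivAt_comp_graph_s15 hA hτ).prodMk (hasDerivAt_comp_graph_s15 hB hτ)).const_sub xb

theorem hasDerivAt_direction (hC : DifferentiableAt ℝ C (r, τ r))
    (hD : DifferentiableAt ℝ D (r, τ r)) (hτ : HasDerivAt τ τ' r)
    (hCR : IsCauchyRiemannAt A B C D (r, τ r)) :
    HasDerivAt (direction C D τ) (τ' • xs A B (r, τ r) - xt A B (r, τ r)) r := by
  refine ((hasDerivAt_comp_graph_s15 hD hτ).neg.prodMk (hasDerivAt_comp_graph_s15 hC hτ)).congr_deriv ?_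
  ext <;> simp only [xs, xt, hCR.pds_A, hCR.pdt_A, hCR.pds_B, hCR.pdt_B, Prod.fst_sub,
    Prod.snd_sub, Prod.smul_fst, Prod.smul_snd, smul_eq_mul] <;> ring

theorem det2_deriv_displacement_deriv_direction (hA : DifferentiableAt ℝ A (r, τ r))
    (hB : DifferentiableAt ℝ B (r, τ r)) (hC : DifferentiableAt ℝ C (r, τ r))
    (hD : DifferentiableAt ℝ D (r, τ r)) (hτ : DifferentiableAt ℝ τ r)
    (hCR : IsCauchyRiemannAt A B C D (r, τ r)) (xb : ℝ × ℝ) :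
    det2 (deriv (displacement A B τ xb) r) (deriv (direction C D τ) r) =
      deltaMap A B (r, τ r) * (1 + deriv τ r ^ 2) := by
  rw [(hasDerivAt_displacement hA hB hτ.hasDerivAt xb).deriv,
    (hasDerivAt_direction hC hD hτ.hasDerivAt hCR).deriv, det2_neg_add_smul_smul_sub]
  simp only [deltaMap, det2, xs, xt]
  ring

theorem det2_deriv_direction_ne_zero {xb : ℝ × ℝ} (hA : DifferentiableAt ℝ A (r, τ r))
    (hB : DifferentiableAt ℝ B (r, τ r)) (hC : DifferentiableAt ℝ C (r, τ r))
    (hD : DifferentiableAt ℝ D (r, τ r)) (hτ : DifferentiableAt ℝ τ r)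
    (hCR : IsCauchyRiemannAt A B C D (r, τ r))
    (hne : det2 (xt A B (r, τ r)) (direction C D τ r) ≠ 0)
    (hyc : det2 (deriv (displacement A B τ xb) r) (direction C D τ r) = 0) :
    det2 (deriv (direction C D τ) r) (direction C D τ r) ≠ 0 := by
  rw [(hasDerivAt_displacement hA hB hτ.hasDerivAt xb).deriv] at hyc
  rw [(hasDerivAt_direction hC hD hτ.hasDerivAt hCR).deriv]
  exact det2_smul_sub_ne_zero hne hyc

theorem deriv_comp_graph_eq_neg_det2 (hA : DifferentiableAt ℝ A (r, τ r))
    (hB : DifferentiableAt ℝ B (r, τ r)) (hg : DifferentiableAt ℝ g (r, τ r))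
    (hτ : DifferentiableAt ℝ τ r) {c : ℝ × ℝ} (hgs : pds g (r, τ r) = det2 (xs A B (r, τ r)) c)
    (hgt : pdt g (r, τ r) = det2 (xt A B (r, τ r)) c) (xb : ℝ × ℝ) :
    deriv (fun r ↦ g (r, τ r)) r = -det2 (deriv (displacement A B τ xb) r) c := by
  rw [(hasDerivAt_comp_graph_s15 hg hτ.hasDerivAt).deriv, hgs, hgt,
    (hasDerivAt_displacement hA hB hτ.hasDerivAt xb).deriv]
  simp only [det2, Prod.fst_neg, Prod.snd_neg, Prod.fst_add, Prod.snd_add, Prod.smul_fst,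
    Prod.smul_snd, smul_eq_mul]
  ring

theorem eventually_comp_graph {P : ℝ × ℝ → Prop} (hτ : ContinuousAt τ r)
    (hP : ∀ᶠ p in 𝓝 (r, τ r), P p) : ∀ᶠ r' in 𝓝 r, P (r', τ r') :=
  (continuousAt_id.prodMk hτ).eventually hP

theorem eventually_differentiableAt_graph {n : WithTop ℕ∞} (hf : ContDiffAt ℝ n f (r, τ r))
    (hn : n ≠ 0) (hτ : ContinuousAt τ r) :
    ∀ᶠ r' in 𝓝 r, DifferentiableAt ℝ f (r', τ r') :=
  eventually_comp_graph hτ (eventually_differentiableAt_of_contDiffAt hf hn)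

theorem det2_deriv_displacement_deriv_direction_eventuallyEq {n : WithTop ℕ∞} (hn : n ≠ 0)
    (hA : ContDiffAt ℝ n A (r, τ r)) (hB : ContDiffAt ℝ n B (r, τ r))
    (hC : ContDiffAt ℝ n C (r, τ r)) (hD : ContDiffAt ℝ n D (r, τ r)) (hτ : ContDiffAt ℝ n τ r)
    (hCR : ∀ᶠ p in 𝓝 (r, τ r), IsCauchyRiemannAt A B C D p) (xb : ℝ × ℝ) :
    (fun r' ↦ det2 (deriv (displacement A B τ xb) r') (deriv (direction C D τ) r')) =ᶠ[𝓝 r]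
      fun r' ↦ deltaMap A B (r', τ r') * (1 + deriv τ r' ^ 2) := by
  have hτc := hτ.continuousAt
  filter_upwards [eventually_differentiableAt_graph hA hn hτc,
    eventually_differentiableAt_graph hB hn hτc, eventually_differentiableAt_graph hC hn hτc,
    eventually_differentiableAt_graph hD hn hτc,
    eventually_differentiableAt_of_contDiffAt hτ hn, eventually_comp_graph hτc hCR]
    with r' hAr hBr hCr hDr hτr hCRr
  exact det2_deriv_displacement_deriv_direction hAr hBr hCr hDr hτr hCRr xb

theorem deriv_comp_graph_eventuallyEq {n : WithTop ℕ∞} (hn : n ≠ 0)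
    (hA : ContDiffAt ℝ n A (r, τ r)) (hB : ContDiffAt ℝ n B (r, τ r))
    (hg : ContDiffAt ℝ n g (r, τ r)) (hτ : ContDiffAt ℝ n τ r)
    (hgs : ∀ᶠ p in 𝓝 (r, τ r), pds g p = det2 (xs A B p) (cmap C D p))
    (hgt : ∀ᶠ p in 𝓝 (r, τ r), pdt g p = det2 (xt A B p) (cmap C D p)) (xb : ℝ × ℝ) :
    deriv (fun r' ↦ g (r', τ r')) =ᶠ[𝓝 r]
      fun r' ↦ -det2 (deriv (displacement A B τ xb) r') (direction C D τ r') := by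
  have hτc := hτ.continuousAt
  filter_upwards [eventually_differentiableAt_graph hA hn hτc,
    eventually_differentiableAt_graph hB hn hτc, eventually_differentiableAt_graph hg hn hτc,
    eventually_differentiableAt_of_contDiffAt hτ hn, eventually_comp_graph hτc hgs,
    eventually_comp_graph hτc hgt] with r' hAr hBr hgr hτr hgsr hgtr
  exact deriv_comp_graph_eq_neg_det2 hAr hBr hgr hτr hgsr hgtr xb

theorem deriv_deriv_deriv_deriv_comp_graph {xb : ℝ × ℝ}
    (hA : ContDiffAt ℝ 3 A (r, τ r)) (hB : ContDiffAt ℝ 3 B (r, τ r))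
    (hC : ContDiffAt ℝ 3 C (r, τ r)) (hD : ContDiffAt ℝ 3 D (r, τ r))
    (hg : ContDiffAt ℝ 3 g (r, τ r)) (hτ : ContDiffAt ℝ 3 τ r)
    (hCR : ∀ᶠ p in 𝓝 (r, τ r), IsCauchyRiemannAt A B C D p)
    (hgs : ∀ᶠ p in 𝓝 (r, τ r), pds g p = det2 (xs A B p) (cmap C D p))
    (hgt : ∀ᶠ p in 𝓝 (r, τ r), pdt g p = det2 (xt A B p) (cmap C D p))
    (hyc : ∀ᶠ r' in 𝓝 r, det2 (displacement A B τ xb r') (direction C D τ r') = 0)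
    (hy0 : displacement A B τ xb r = 0) (hδ : deltaMap A B (r, τ r) = 0)
    (hδ' : deriv (fun r' ↦ deltaMap A B (r', τ r')) r = 0)
    (hne : det2 (xt A B (r, τ r)) (direction C D τ r) ≠ 0) :
    deriv (deriv (deriv (deriv fun r' ↦ g (r', τ r')))) r =
      (1 + deriv τ r ^ 2) * deriv (deriv fun r' ↦ deltaMap A B (r', τ r')) r := by
  have hy := contDiffAt_displacement hA hB hτ xb
  have hc := contDiffAt_direction hC hD hτ
  have hΔ : ContDiffAt ℝ 2 (fun r' ↦ deltaMap A B (r', τ r')) r :=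
    (contDiffAt_deltaMap hA hB (by norm_num)).comp r
      (contDiffAt_id.prodMk (hτ.of_le (by norm_num)))
  have hscale : ContDiffAt ℝ 1 (fun r' ↦ 1 + deriv τ r' ^ 2) r :=
    contDiffAt_const.add ((hτ.derivWithin (by norm_num)).pow 2)
  have hpair := det2_deriv_displacement_deriv_direction_eventuallyEq three_ne_zero hA hB hC hD hτ
    hCR xb
  have hpair' : deriv (fun r' ↦ deltaMap A B (r', τ r') * (1 + deriv τ r' ^ 2)) r = 0 := by
    rw [deriv_mul_of_eq_zero (hΔ.differentiableAt two_ne_zero) hscale.continuousAt hδ, hδ',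
      zero_mul]
  have hy'c := bilinear_deriv_eq_zero det2CLM
    (hy.differentiableAt three_ne_zero) hc.continuousAt hy0 hyc
  have htransverse := det2_deriv_direction_ne_zero (hA.differentiableAt three_ne_zero)
    (hB.differentiableAt three_ne_zero) (hC.differentiableAt three_ne_zero)
    (hD.differentiableAt three_ne_zero) (hτ.differentiableAt three_ne_zero)
    hCR.self_of_nhds hne hy'c
  calc deriv (deriv (deriv (deriv fun r' ↦ g (r', τ r')))) r
    _ = deriv (deriv fun r' ↦
          det2 (deriv (displacement A B τ xb) r') (deriv (direction C D τ) r')) r :=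
      deriv_deriv_deriv_deriv_eq_of_bilinear_eventuallyEq_zero det2CLM hy hc hy0 hyc
        (deriv_comp_graph_eventuallyEq three_ne_zero hA hB hg hτ hgs hgt xb)
        (fun _ ↦ eq_zero_of_det2_eq_zero_s15 htransverse)
        (hpair.self_of_nhds.trans (mul_eq_zero_of_left hδ _))
        (hpair.deriv_eq.trans hpair')
    _ = deriv (deriv fun r' ↦ deltaMap A B (r', τ r')) r * (1 + deriv τ r ^ 2) :=
      hpair.deriv.deriv_eq.trans (deriv_deriv_mul_of_eq_zero hΔ hscale hδ hδ')
    _ = (1 + deriv τ r ^ 2) * deriv (deriv fun r' ↦ deltaMap A B (r', τ r')) r := mul_comm _ _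

end Graph

theorem Gssss_formula
    (Ω : Set (ℝ × ℝ)) (hΩ : IsOpen Ω)
    (A B C D : ℝ × ℝ → ℝ)
    (hA : ContDiffOn ℝ (⊤ : ℕ∞) A Ω) (hB : ContDiffOn ℝ (⊤ : ℕ∞) B Ω)
    (hC : ContDiffOn ℝ (⊤ : ℕ∞) C Ω) (hD : ContDiffOn ℝ (⊤ : ℕ∞) D Ω)
    (hCR1 : ∀ p ∈ Ω, pds A p = - pdt D p)
    (hCR2 : ∀ p ∈ Ω, pdt A p = pds D p)
    (hCR3 : ∀ p ∈ Ω, pds B p = pdt C p)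
    (hCR4 : ∀ p ∈ Ω, pdt B p = - pds C p)
    (g : ℝ × ℝ → ℝ) (hg : ContDiffOn ℝ (⊤ : ℕ∞) g Ω)
    (hgs : ∀ p ∈ Ω, pds g p = det2 (xs A B p) (cmap C D p))
    (hgt : ∀ p ∈ Ω, pdt g p = det2 (xt A B p) (cmap C D p))
    (s₀ t₀ : ℝ) (hst₀ : (s₀, t₀) ∈ Ω)
    (hne₀ : det2 (xt A B (s₀, t₀)) (cmap C D (s₀, t₀)) ≠ 0)
    (I : Set ℝ) (U : Set (ℝ × ℝ)) (hI : IsOpen I) (hU : IsOpen U)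
    (hs₀ : s₀ ∈ I) (hx₀ : xmap A B (s₀, t₀) ∈ U)
    (T : ℝ → ℝ × ℝ → ℝ)
    (hT : ContDiffOn ℝ (⊤ : ℕ∞) (fun q : ℝ × (ℝ × ℝ) => T q.1 q.2) (I ×ˢ U))
    (hT₀ : T s₀ (xmap A B (s₀, t₀)) = t₀)
    (hTmem : ∀ s ∈ I, ∀ xb ∈ U, (s, T s xb) ∈ Ω)
    (hTeq : ∀ s ∈ I, ∀ xb ∈ U,
      det2 (xb - xmap A B (s, T s xb)) (cmap C D (s, T s xb)) = 0)
    (s : ℝ) (xb : ℝ × ℝ) (hs : s ∈ I) (hxb : xb ∈ U)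
    (hx : xb = xmap A B (s, T s xb))
    (hδ : deltaMap A B (s, T s xb) = 0)
    (hδs : deriv (fun s' => deltaMap A B (s', T s' xb)) s = 0)
    (hne : det2 (xt A B (s, T s xb)) (cmap C D (s, T s xb)) ≠ 0)
    :
    deriv (deriv (deriv (deriv (fun s' => g (s', T s' xb))))) s
        = (1 + (deriv (fun s' => T s' xb) s) ^ 2)
            * deriv (deriv (fun s' => deltaMap A B (s', T s' xb))) s ∧
    (deriv (deriv (deriv (deriv (fun s' => g (s', T s' xb))))) s ≠ 0 ↔
      deriv (deriv (fun s' => deltaMap A B (s', T s' xb))) s ≠ 0) := by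
  set τ : ℝ → ℝ := fun r ↦ T r xb
  have hτ : ContDiffAt ℝ 3 τ s := by
    have hT_graph : ContDiffOn ℝ (⊤ : ℕ∞) τ I :=
      hT.comp (contDiff_id.prodMk contDiff_const).contDiffOn fun r hr ↦ ⟨hr, hxb⟩
    exact (hT_graph.contDiffAt (hI.mem_nhds hs)).of_le (by norm_cast)
  have hΩs : Ω ∈ 𝓝 (s, τ s) := hΩ.mem_nhds (hTmem s hs xb hxb)
  have smooth {f : ℝ × ℝ → ℝ} (hf : ContDiffOn ℝ (⊤ : ℕ∞) f Ω) : ContDiffAt ℝ 3 f (s, τ s) :=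
    (hf.contDiffAt hΩs).of_le (by norm_cast)
  have hCR : ∀ᶠ p in 𝓝 (s, τ s), IsCauchyRiemannAt A B C D p :=
    eventually_of_mem hΩs fun p hp ↦ ⟨hCR1 p hp, hCR2 p hp, hCR3 p hp, hCR4 p hp⟩
  have hinc : ∀ᶠ r in 𝓝 s, det2 (displacement A B τ xb r) (direction C D τ r) = 0 :=
    eventually_of_mem (hI.mem_nhds hs) fun r hr ↦ hTeq r hr xb hxb
  have formula := deriv_deriv_deriv_deriv_comp_graph (smooth hA) (smooth hB) (smooth hC)
    (smooth hD) (smooth hg) hτ hCR (eventually_of_mem hΩs hgs) (eventually_of_mem hΩs hgt) hinc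
    (sub_eq_zero.mpr hx) hδ hδs hne
  have hpos : 1 + deriv τ s ^ 2 ≠ 0 := by positivity
  exact ⟨formula, by rw [formula, mul_ne_zero_iff, and_iff_right hpos]⟩
end
end

section
/- Let (s,t) ∈ Ω and suppose x_s(s,t) + λ·x_t(s,t) = 0 for some λ ∈ ℝ. Then δ_t(s,t) = −[x_t(s,t), x_st(s,t) + λ·x_tt(s,t)]. In particular, if δ_t(s,t) ≠ 0 then [x_t(s,t), x_st(s,t) + λ·x_tt(s,t)] ≠ 0. (This is the computation proving that the generating family G is a versal unfolding at an A₃ point.) -/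
noncomputable section

/-! Write `δ = [x_s, x_t]`. The Leibniz rule gives `δ_t = [x_st, x_t] + [x_s, x_tt]`, and
substituting `x_s = -λ x_t` turns both terms into brackets with `x_t`, which combine by
bilinearity. -/

theorem det2_add_det2_of_add_smul_eq_zero {u v : ℝ × ℝ} {r : ℝ} (h : u + r • v = 0)
    (a b : ℝ × ℝ) : det2 a v + det2 u b = -det2 v (a + r • b) := by
  obtain rfl : u = -(r • v) := eq_neg_of_add_eq_zero_left h
  simp only [det2, Prod.fst_neg, Prod.snd_neg, Prod.fst_add, Prod.snd_add, Prod.smul_fst,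
    Prod.smul_snd, smul_eq_mul]
  ring

theorem fderiv_det2_apply {E : Type*} [NormedAddCommGroup E] [NormedSpace ℝ E]
    {u v : E → ℝ × ℝ} {p : E} (hu : DifferentiableAt ℝ u p) (hv : DifferentiableAt ℝ v p) (w : E) :
    fderiv ℝ (fun q => det2 (u q) (v q)) p w =
      det2 (fderiv ℝ u p w) (v p) + det2 (u p) (fderiv ℝ v p w) := by
  have hdet : HasFDerivAt (fun q => det2 (u q) (v q)) _ p :=
    (hu.hasFDerivAt.fst.mul hv.hasFDerivAt.snd).sub (hu.hasFDerivAt.snd.mul hv.hasFDerivAt.fst)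
  rw [hdet.fderiv]
  simp only [det2, sub_apply, add_apply, smul_apply, ContinuousLinearMap.comp_apply,
    ContinuousLinearMap.coe_fst', ContinuousLinearMap.coe_snd', smul_eq_mul]
  ring

theorem differentiableAt_fderiv_apply {𝕜 E F : Type*} [NontriviallyNormedField 𝕜]
    [NormedAddCommGroup E] [NormedSpace 𝕜 E] [NormedAddCommGroup F] [NormedSpace 𝕜 F]
    {f : E → F} {p : E} (hf : ContDiffAt 𝕜 2 f p) (w : E) :
    DifferentiableAt 𝕜 (fun q => fderiv 𝕜 f q w) p :=
  ((hf.fderiv_right one_add_one_eq_two.le).differentiableAt one_ne_zero).clm_apply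
    (differentiableAt_const w)

theorem deltaMap_eq_det2 (A B : ℝ × ℝ → ℝ) :
    deltaMap A B = fun p => det2 (xs A B p) (xt A B p) := by
  funext p
  simp only [deltaMap, det2, xs, xt, mul_comm]

theorem pdt_deltaMap {A B : ℝ × ℝ → ℝ} {p : ℝ × ℝ}
    (hAs : DifferentiableAt ℝ (pds A) p) (hAt : DifferentiableAt ℝ (pdt A) p)
    (hBs : DifferentiableAt ℝ (pds B) p) (hBt : DifferentiableAt ℝ (pdt B) p) :
    pdt (deltaMap A B) p =
      det2 (pdt (pds A) p, pdt (pds B) p) (xt A B p) +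
        det2 (xs A B p) (pdt (pdt A) p, pdt (pdt B) p) := by
  have hxs : DifferentiableAt ℝ (xs A B) p := hAs.prodMk hBs
  have hxt : DifferentiableAt ℝ (xt A B) p := hAt.prodMk hBt
  have hxst : fderiv ℝ (xs A B) p (0, 1) = (pdt (pds A) p, pdt (pds B) p) :=
    DFunLike.congr_fun (hAs.fderiv_prodMk hBs) (0, 1)
  have hxtt : fderiv ℝ (xt A B) p (0, 1) = (pdt (pdt A) p, pdt (pdt B) p) :=
    DFunLike.congr_fun (hAt.fderiv_prodMk hBt) (0, 1)
  rw [deltaMap_eq_det2, pdt, fderiv_det2_apply hxs hxt, hxst, hxtt]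

theorem deltat_formula_A3_versality_general {A B : ℝ × ℝ → ℝ} {p : ℝ × ℝ}
    (hA : ContDiffAt ℝ 2 A p) (hB : ContDiffAt ℝ 2 B p) {lam : ℝ}
    (hlam : xs A B p + lam • xt A B p = 0) :
    pdt (deltaMap A B) p =
      -det2 (xt A B p)
        ((pdt (pds A) p, pdt (pds B) p) + lam • (pdt (pdt A) p, pdt (pdt B) p)) := by
  have hδ := pdt_deltaMap
    (differentiableAt_fderiv_apply hA (1, 0)) (differentiableAt_fderiv_apply hA (0, 1))
    (differentiableAt_fderiv_apply hB (1, 0)) (differentiableAt_fderiv_apply hB (0, 1))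
  exact hδ.trans (det2_add_det2_of_add_smul_eq_zero hlam _ _)

theorem deltat_formula_A3_versality
    (Ω : Set (ℝ × ℝ)) (hΩ : IsOpen Ω)
    (A B C D : ℝ × ℝ → ℝ)
    (hA : ContDiffOn ℝ (⊤ : ℕ∞) A Ω) (hB : ContDiffOn ℝ (⊤ : ℕ∞) B Ω)
    (hC : ContDiffOn ℝ (⊤ : ℕ∞) C Ω) (hD : ContDiffOn ℝ (⊤ : ℕ∞) D Ω)
    (hCR1 : ∀ p ∈ Ω, pds A p = - pdt D p)
    (hCR2 : ∀ p ∈ Ω, pdt A p = pds D p)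
    (hCR3 : ∀ p ∈ Ω, pds B p = pdt C p)
    (hCR4 : ∀ p ∈ Ω, pdt B p = - pds C p)
    (p : ℝ × ℝ) (hp : p ∈ Ω) (lam : ℝ)
    (hlam : xs A B p + lam • xt A B p = 0)
    :
    pdt (deltaMap A B) p
        = - det2 (xt A B p)
            ((pdt (pds A) p, pdt (pds B) p) + lam • (pdt (pdt A) p, pdt (pdt B) p)) ∧
    (pdt (deltaMap A B) p ≠ 0 →
      det2 (xt A B p)
        ((pdt (pds A) p, pdt (pds B) p) + lam • (pdt (pdt A) p, pdt (pdt B) p)) ≠ 0) := by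
  have contDiffAt_two {f : ℝ × ℝ → ℝ} (hf : ContDiffOn ℝ (⊤ : ℕ∞) f Ω) : ContDiffAt ℝ 2 f p :=
    (hf.contDiffAt (hΩ.mem_nhds hp)).of_le (by norm_cast)
  have hδ := deltat_formula_A3_versality_general (contDiffAt_two hA) (contDiffAt_two hB) hlam
  exact ⟨hδ, fun hne => neg_ne_zero.mp (hδ ▸ hne)⟩
end
end
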